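/- arXiv:1012.1237 — 4 statements merged into one kernel-verified Lean document; each statement's English description precedes it below -/
import Mathlib

section
/- For every n ≥ 1 and every type assignment t : {1,…,2n} → {A,B}, the 1-attribute stable roommate instance determined by t has either exactly one or exactly two stable matchings. -/
/-!
The proof is an induction on the (even) size of a finite set `S` of people, removing one pair at a
time. Let `m < m₂` be the two smallest and `a₂ < a` the two largest members of `S`.

* If two people rank each other first, they are matched in every stable matching, and the stable
  matchings of `S` correspond to those of `S` without this pair (`MutualTop`). This settles the
  cases where `m` is of type `B` and `a` of type `A`, where `m` and `m₂` are both of type `A`, and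
  where `a` and `a₂` are both of type `B`.
* If `m` and `a` are of type `A` and `m₂` is of type `B`, then `a` ranks `m` and then `m₂`, and `m₂`
  ranks `a` first, so `{m, a}` or `{m₂, a}` is matched. If there is a third person of type `A`, that
  person and `m` would block `{m, a}`, so `{m₂, a}` is forced and can be removed. Otherwise everybody
  but `m` and `a` is of type `B`, and each of the two options leaves an instance with exactly one
  stable matching, since all of its members but possibly the smallest are of type `B`
  (`uniq_of_hi`). See `two_ends`; the case of `m`, `a` of type `B` is its mirror image.
* If `m`, `a₂` are of type `A` and `m₂`, `a` of type `B`, then one of `{m, a₂}`, `{m₂, a}`,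
  `{m₂, a₂}` is matched, as `{m₂, a₂}` would otherwise block. With a third person of each type the
  pair `{m₂, a₂}` is forced and can be removed; otherwise at most two options, each with a unique
  completion, remain as in the previous case (`alternating`).

Mirror images are handled by the structure `Axis`, which is invariant under reversing the order and
exchanging the two types.
-/

/-- The two preference types in the 1-attribute stable roommate model. -/
inductive AttrType : Type
  | A : AttrType
  | B : AttrType
  deriving DecidableEq

/-- In the 1-attribute instance with type assignment `t`, person `i`
prefers person `j` to person `k`: type `A` people prefer smaller indices,
type `B` people prefer larger indices. -/
def Prefers (t : ℕ → AttrType) (i j k : ℕ) : Prop :=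
  match t i with
  | AttrType.A => j < k
  | AttrType.B => k < j

/-- `M` is a matching of the people in `S`: a partition of `S` into
unordered pairs. -/
def IsMatching (S : Finset ℕ) (M : Finset (Finset ℕ)) : Prop :=
  (∀ p ∈ M, ∃ i j, i ≠ j ∧ i ∈ S ∧ j ∈ S ∧ p = {i, j}) ∧
  (∀ i ∈ S, ∃! p, p ∈ M ∧ i ∈ p)

/-- The pair `{i, j}` is a blocking pair for the matching `M`:
it is not in `M`, and each of `i`, `j` prefers the other to their
partner in `M`. -/
def IsBlocking (t : ℕ → AttrType) (M : Finset (Finset ℕ)) (i j : ℕ) : Prop :=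
  i ≠ j ∧ ({i, j} : Finset ℕ) ∉ M ∧
  (∀ k, ({i, k} : Finset ℕ) ∈ M → k ≠ i → Prefers t i j k) ∧
  (∀ k, ({j, k} : Finset ℕ) ∈ M → k ≠ j → Prefers t j i k)

/-- `M` is a stable matching of the 1-attribute instance on the set of
people `S` with type assignment `t`. -/
def IsStable (t : ℕ → AttrType) (S : Finset ℕ) (M : Finset (Finset ℕ)) : Prop :=
  IsMatching S M ∧ ∀ i ∈ S, ∀ j ∈ S, ¬ IsBlocking t M i j

section OneAttribute

variable {t : ℕ → AttrType} {S : Finset ℕ} {M : Finset (Finset ℕ)}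

/-! ### Partners and blocking pairs -/

theorem prefers_irrefl (t : ℕ → AttrType) (i j : ℕ) : ¬ Prefers t i j j := by
  unfold Prefers; split <;> simp

theorem pair_eq {a b c d : ℕ} (h : ({a, b} : Finset ℕ) = {c, d}) :
    (a = c ∧ b = d) ∨ (a = d ∧ b = c) := by
  have := congrArg (fun s : Finset ℕ => (s : Set ℕ)) h
  simpa [Set.pair_eq_pair_iff] using this

theorem IsMatching.partner (h : IsMatching S M) {x : ℕ} (hx : x ∈ S) :
    ∃ y ∈ S, y ≠ x ∧ {x, y} ∈ M := by
  obtain ⟨p, ⟨hp, hxp⟩, -⟩ := h.2 x hx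
  obtain ⟨i, j, hij, hi, hj, rfl⟩ := h.1 p hp
  simp only [Finset.mem_insert, Finset.mem_singleton] at hxp
  rcases hxp with rfl | rfl
  · exact ⟨j, hj, hij.symm, hp⟩
  · exact ⟨i, hi, hij, by rwa [Finset.pair_comm]⟩

theorem IsMatching.mem (h : IsMatching S M) {x y : ℕ} (hxy : {x, y} ∈ M) :
    x ∈ S ∧ y ∈ S ∧ x ≠ y := by
  obtain ⟨i, j, hij, hi, hj, he⟩ := h.1 _ hxy
  rcases pair_eq he with ⟨rfl, rfl⟩ | ⟨rfl, rfl⟩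
  · exact ⟨hi, hj, hij⟩
  · exact ⟨hj, hi, hij.symm⟩

theorem IsMatching.unique (h : IsMatching S M) {x y z : ℕ} (hy : {x, y} ∈ M) (hz : {x, z} ∈ M) :
    y = z := by
  obtain ⟨hx, -, hne⟩ := h.mem hy
  have := (h.2 x hx).unique ⟨hy, by simp⟩ ⟨hz, by simp⟩
  rcases pair_eq this with ⟨-, h⟩ | ⟨h1, h2⟩
  · exact h
  · exact absurd h2.symm hne

theorem IsStable.not_block (h : IsStable t S M) {x y u v : ℕ} (hxy : x ≠ y) (hu : {x, u} ∈ M)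
    (hv : {y, v} ∈ M) (h1 : Prefers t x y u) (h2 : Prefers t y x v) : False := by
  refine h.2 x (h.1.mem hu).1 y (h.1.mem hv).1 ⟨hxy, fun hm => ?_, fun k hk _ => ?_, fun k hk _ => ?_⟩
  · rw [h.1.unique hu hm] at h1
    exact prefers_irrefl _ _ _ h1
  · rwa [h.1.unique hk hu]
  · rwa [h.1.unique hk hv]

/-! ### Removing and adding a pair -/

/-- The people of `S` other than `x` and `y`. -/
def del (S : Finset ℕ) (x y : ℕ) : Finset ℕ := (S.erase x).erase y

theorem mem_del {x y z : ℕ} : z ∈ del S x y ↔ z ∈ S ∧ z ≠ x ∧ z ≠ y := by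
  simp only [del, Finset.mem_erase]; tauto

theorem card_del {x y : ℕ} (hx : x ∈ S) (hy : y ∈ S) (hxy : x ≠ y) :
    (del S x y).card + 2 = S.card := by
  have h1 := Finset.card_erase_add_one hx
  have h2 := Finset.card_erase_add_one (Finset.mem_erase.2 ⟨hxy.symm, hy⟩)
  unfold del; omega

theorem IsStable.restrict (h : IsStable t S M) {x y : ℕ} (hxy : {x, y} ∈ M) :
    IsStable t (del S x y) (M.erase {x, y}) := by
  have hyx : {y, x} ∈ M := by rwa [Finset.pair_comm]
  -- partners of the remaining people are unaffected
  have key : ∀ i ∈ del S x y, ∀ p ∈ M, i ∈ p → p ≠ {x, y} := by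
    rintro i hi p - hip rfl
    have := mem_del.1 hi
    simp only [Finset.mem_insert, Finset.mem_singleton] at hip
    tauto
  refine ⟨⟨?_, ?_⟩, ?_⟩
  · intro p hp
    obtain ⟨hne, hpM⟩ := Finset.mem_erase.1 hp
    obtain ⟨i, j, hij, hi, hj, rfl⟩ := h.1.1 p hpM
    have hp' : {j, i} ∈ M := by rwa [Finset.pair_comm]
    refine ⟨i, j, hij, mem_del.2 ⟨hi, ?_, ?_⟩, mem_del.2 ⟨hj, ?_, ?_⟩, rfl⟩
    · rintro rfl; exact hne (by rw [h.1.unique hpM hxy])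
    · rintro rfl; exact hne (by rw [h.1.unique hpM hyx, Finset.pair_comm])
    · rintro rfl; exact hne (by rw [h.1.unique hp' hxy, Finset.pair_comm])
    · rintro rfl; exact hne (by rw [h.1.unique hp' hyx])
  · intro i hi
    obtain ⟨p, ⟨hp, hip⟩, hu⟩ := h.1.2 i (mem_del.1 hi).1
    exact ⟨p, ⟨Finset.mem_erase.2 ⟨key i hi p hp hip, hp⟩, hip⟩,
      fun q hq => hu q ⟨(Finset.mem_erase.1 hq.1).2, hq.2⟩⟩
  · rintro i hi j hj ⟨hij, hn, h1, h2⟩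
    refine h.2 i (mem_del.1 hi).1 j (mem_del.1 hj).1 ⟨hij, fun hm => ?_, fun k hk => ?_, fun k hk => ?_⟩
    · exact hn (Finset.mem_erase.2 ⟨key i hi _ hm (by simp), hm⟩)
    · exact h1 k (Finset.mem_erase.2 ⟨key i hi _ hk (by simp), hk⟩)
    · exact h2 k (Finset.mem_erase.2 ⟨key j hj _ hk (by simp), hk⟩)

/-- Adding the pair `{x, y}` to a stable matching of the others preserves stability, provided
neither `x` nor `y` forms a blocking pair with one of the others. -/
theorem IsStable.extend {x y : ℕ} (hx : x ∈ S) (hy : y ∈ S) (hxy : x ≠ y)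
    (h : IsStable t (del S x y) M)
    (hbx : ∀ z w, {z, w} ∈ M → Prefers t x z y → Prefers t z x w → False)
    (hby : ∀ z w, {z, w} ∈ M → Prefers t y z x → Prefers t z y w → False) :
    IsStable t S (insert {x, y} M) := by
  have old : ∀ p ∈ M, x ∉ p ∧ y ∉ p := by
    intro p hp
    obtain ⟨i, j, -, hi, hj, rfl⟩ := h.1.1 p hp
    have := mem_del.1 hi
    have := mem_del.1 hj
    simp only [Finset.mem_insert, Finset.mem_singleton]
    grind
  have hm : IsMatching S (insert {x, y} M) := by
    refine ⟨?_, ?_⟩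
    · intro p hp
      rcases Finset.mem_insert.1 hp with rfl | hp
      · exact ⟨x, y, hxy, hx, hy, rfl⟩
      · obtain ⟨i, j, hij, hi, hj, rfl⟩ := h.1.1 p hp
        exact ⟨i, j, hij, (mem_del.1 hi).1, (mem_del.1 hj).1, rfl⟩
    · intro i hi
      by_cases hixy : i = x ∨ i = y
      · refine ⟨{x, y}, ⟨by simp, by simpa using hixy⟩, ?_⟩
        rintro q ⟨hq, hiq⟩
        rcases Finset.mem_insert.1 hq with rfl | hq
        · rfl
        · have := old q hq
          rcases hixy with rfl | rfl <;> tauto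
      · push Not at hixy
        obtain ⟨p, ⟨hp, hip⟩, hu⟩ := h.1.2 i (mem_del.2 ⟨hi, hixy.1, hixy.2⟩)
        refine ⟨p, ⟨Finset.mem_insert_of_mem hp, hip⟩, ?_⟩
        rintro q ⟨hq, hiq⟩
        rcases Finset.mem_insert.1 hq with rfl | hq
        · simp only [Finset.mem_insert, Finset.mem_singleton] at hiq
          tauto
        · exact hu q ⟨hq, hiq⟩
  -- a blocking pair with exactly one member in `{x, y}`
  have mixed : ∀ i j, (i = x ∨ i = y) → j ∈ del S x y →
      (∀ k, {i, k} ∈ insert {x, y} M → k ≠ i → Prefers t i j k) →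
      (∀ k, {j, k} ∈ insert {x, y} M → k ≠ j → Prefers t j i k) → False := by
    intro i j hi hj h1 h2
    obtain ⟨w, -, hwj, hw⟩ := h.1.partner hj
    have h3 := h2 w (Finset.mem_insert_of_mem hw) hwj
    rcases hi with rfl | rfl
    · exact hbx j w hw (h1 y (by simp) hxy.symm) h3
    · exact hby j w hw (h1 x (by simp [Finset.pair_comm]) hxy) h3
  refine ⟨hm, ?_⟩
  rintro i hi j hj ⟨hij, hn, h1, h2⟩
  by_cases hi' : i = x ∨ i = y
  · by_cases hj' : j = x ∨ j = y
    · apply hn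
      rcases hi' with rfl | rfl <;> rcases hj' with rfl | rfl
      all_goals first | exact absurd rfl hij | simp [Finset.pair_comm]
    · push Not at hj'
      exact mixed i j hi' (mem_del.2 ⟨hj, hj'.1, hj'.2⟩) h1 h2
  · push Not at hi'
    have hi'' := mem_del.2 ⟨hi, hi'.1, hi'.2⟩
    by_cases hj' : j = x ∨ j = y
    · exact mixed j i hj' hi'' h2 h1
    · push Not at hj'
      refine h.2 i hi'' j (mem_del.2 ⟨hj, hj'.1, hj'.2⟩) ⟨hij, ?_, ?_, ?_⟩
      · exact fun hm => hn (Finset.mem_insert_of_mem hm)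
      · exact fun k hk => h1 k (Finset.mem_insert_of_mem hk)
      · exact fun k hk => h2 k (Finset.mem_insert_of_mem hk)

/-! ### Counting through forced pairs -/

/-- The instance on `S` has exactly one stable matching. -/
def Uniq (t : ℕ → AttrType) (S : Finset ℕ) : Prop :=
  ∃ M₁, ∀ M, IsStable t S M ↔ M = M₁

/-- The instance on `S` has one or two stable matchings: the listed ones may coincide. -/
def OneOrTwo (t : ℕ → AttrType) (S : Finset ℕ) : Prop :=
  ∃ M₁ M₂, ∀ M, IsStable t S M ↔ M = M₁ ∨ M = M₂

theorem Uniq.oneOrTwo (h : Uniq t S) : OneOrTwo t S := by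
  obtain ⟨M₁, h⟩ := h
  exact ⟨M₁, M₁, fun M => by rw [h, or_self]⟩

/-- Every stable matching of the people other than `x`, `y` stays stable once `{x, y}` is added. -/
def Extends (t : ℕ → AttrType) (S : Finset ℕ) (x y : ℕ) : Prop :=
  ∀ M, IsStable t (del S x y) M → IsStable t S (insert {x, y} M)

/-- Every stable matching contains the pair `{x, y}`. -/
def Forced (t : ℕ → AttrType) (S : Finset ℕ) (x y : ℕ) : Prop :=
  ∀ M, IsStable t S M → {x, y} ∈ M

theorem Uniq.of_forced {x y : ℕ} (hf : Forced t S x y) (he : Extends t S x y)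
    (h : Uniq t (del S x y)) : Uniq t S := by
  obtain ⟨M₁, h⟩ := h
  refine ⟨insert {x, y} M₁, fun M => ⟨fun hM => ?_, ?_⟩⟩
  · rw [← (h _).1 (hM.restrict (hf M hM)), Finset.insert_erase (hf M hM)]
  · rintro rfl; exact he _ ((h _).2 rfl)

theorem OneOrTwo.of_forced {x y : ℕ} (hf : Forced t S x y) (he : Extends t S x y)
    (h : OneOrTwo t (del S x y)) : OneOrTwo t S := by
  obtain ⟨M₁, M₂, h⟩ := h
  refine ⟨insert {x, y} M₁, insert {x, y} M₂, fun M => ⟨fun hM => ?_, ?_⟩⟩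
  · have hx := Finset.insert_erase (hf M hM)
    rcases (h _).1 (hM.restrict (hf M hM)) with h | h <;> rw [h] at hx
    · exact Or.inl hx.symm
    · exact Or.inr hx.symm
  · rintro (rfl | rfl)
    · exact he _ ((h _).2 (Or.inl rfl))
    · exact he _ ((h _).2 (Or.inr rfl))

theorem OneOrTwo.of_split {x y u v : ℕ}
    (hs : ∀ M, IsStable t S M → {x, y} ∈ M ∨ {u, v} ∈ M)
    (he : Extends t S x y) (he' : Extends t S u v)
    (h : Uniq t (del S x y)) (h' : Uniq t (del S u v)) : OneOrTwo t S := by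
  obtain ⟨M₁, h⟩ := h
  obtain ⟨M₂, h'⟩ := h'
  refine ⟨insert {x, y} M₁, insert {u, v} M₂, fun M => ⟨fun hM => ?_, ?_⟩⟩
  · rcases hs M hM with hp | hp
    · left; rw [← (h _).1 (hM.restrict hp), Finset.insert_erase hp]
    · right; rw [← (h' _).1 (hM.restrict hp), Finset.insert_erase hp]
  · rintro (rfl | rfl)
    · exact he _ ((h _).2 rfl)
    · exact he' _ ((h' _).2 rfl)

theorem uniq_empty (t : ℕ → AttrType) : Uniq t ∅ := by
  refine ⟨∅, fun M => ⟨fun h => ?_, ?_⟩⟩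
  · refine Finset.eq_empty_of_forall_notMem fun p hp => ?_
    obtain ⟨i, j, -, hi, -⟩ := h.1.1 p hp
    simp at hi
  · rintro rfl
    exact ⟨⟨by simp, by simp⟩, by simp⟩

/-- `x` and `y` rank each other first within `S`. -/
structure MutualTop (t : ℕ → AttrType) (S : Finset ℕ) (x y : ℕ) : Prop where
  left_mem : x ∈ S
  right_mem : y ∈ S
  ne : x ≠ y
  left_top : ∀ z ∈ S, z ≠ x → z ≠ y → Prefers t x y z
  right_top : ∀ z ∈ S, z ≠ x → z ≠ y → Prefers t y x z

theorem prefers_asymm {i j k : ℕ} (h : Prefers t i j k) : ¬ Prefers t i k j := by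
  unfold Prefers at *; split at h <;> simp_all <;> omega

theorem MutualTop.forced {x y : ℕ} (h : MutualTop t S x y) : Forced t S x y := by
  intro M hM
  by_contra hn
  obtain ⟨u, hu, hux, hxu⟩ := hM.1.partner h.left_mem
  obtain ⟨v, hv, hvy, hyv⟩ := hM.1.partner h.right_mem
  refine hM.not_block h.ne hxu hyv (h.left_top u hu hux ?_) (h.right_top v hv ?_ hvy)
  · rintro rfl; exact hn hxu
  · rintro rfl; exact hn (by rwa [Finset.pair_comm])

theorem MutualTop.extends {x y : ℕ} (h : MutualTop t S x y) : Extends t S x y := by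
  intro M hM
  refine hM.extend h.left_mem h.right_mem h.ne ?_ ?_
  · intro z w hz h1 _
    have := mem_del.1 (hM.1.mem hz).1
    exact prefers_asymm h1 (h.left_top z this.1 this.2.1 this.2.2)
  · intro z w hz h1 _
    have := mem_del.1 (hM.1.mem hz).1
    exact prefers_asymm h1 (h.right_top z this.1 this.2.1 this.2.2)

/-! ### Orientations of the line -/

/-- `r` is one of the two orientations of the line, and `c` is the type of the people who prefer
`r`-small partners; everybody else prefers `r`-large partners. -/
structure Axis (t : ℕ → AttrType) (r : ℕ → ℕ → Prop) (c : AttrType) : Prop where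
  irrefl : ∀ x, ¬ r x x
  trans : ∀ x y z, r x y → r y z → r x z
  exists_min : ∀ S : Finset ℕ, S.Nonempty → ∃ m ∈ S, ∀ z ∈ S, z ≠ m → r m z
  exists_max : ∀ S : Finset ℕ, S.Nonempty → ∃ m ∈ S, ∀ z ∈ S, z ≠ m → r z m
  lo : ∀ i, t i = c → ∀ j k, Prefers t i j k ↔ r j k
  hi : ∀ i, t i ≠ c → ∀ j k, Prefers t i j k ↔ r k j

theorem axis_lt (t : ℕ → AttrType) : Axis t (· < ·) AttrType.A where
  irrefl := lt_irrefl
  trans _ _ _ := lt_trans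
  exists_min S h := ⟨S.min' h, S.min'_mem h, fun z hz hne =>
    lt_of_le_of_ne (S.min'_le z hz) hne.symm⟩
  exists_max S h := ⟨S.max' h, S.max'_mem h, fun z hz hne =>
    lt_of_le_of_ne (S.le_max' z hz) hne⟩
  lo i h j k := by simp [Prefers, h]
  hi i h j k := by
    have h : t i = AttrType.B := by cases ht : t i <;> simp_all
    simp [Prefers, h]

theorem axis_gt (t : ℕ → AttrType) : Axis t (fun x y => y < x) AttrType.B where
  irrefl := lt_irrefl
  trans _ _ _ h h' := lt_trans h' h
  exists_min := (axis_lt t).exists_max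
  exists_max := (axis_lt t).exists_min
  lo i h j k := by simp [Prefers, h]
  hi i h j k := by
    have h : t i = AttrType.A := by cases ht : t i <;> simp_all
    simp [Prefers, h]

variable {r : ℕ → ℕ → Prop} {c : AttrType}

theorem Axis.asymm (ax : Axis t r c) {x y : ℕ} (h : r x y) : ¬ r y x :=
  fun hyx => ax.irrefl _ (ax.trans _ _ _ h hyx)

/-- If everybody but possibly the smallest person prefers large partners, then the two largest
people rank each other first, and removing them preserves this property. -/
theorem uniq_of_hi (ax : Axis t r c) (k : ℕ) : ∀ S : Finset ℕ, S.card = 2 * k →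
    (∀ z ∈ S, t z = c → ∀ y ∈ S, y ≠ z → r z y) → Uniq t S := by
  induction k with
  | zero =>
    intro S hS _
    rw [Finset.card_eq_zero.1 (by omega : S.card = 0)]
    exact uniq_empty t
  | succ k ih =>
    intro S hS hc
    obtain ⟨a, ha, hamax⟩ := ax.exists_max S (Finset.card_pos.1 (by omega))
    have hcard := Finset.card_erase_add_one ha
    obtain ⟨b, hb, hbmax⟩ := ax.exists_max (S.erase a) (Finset.card_pos.1 (by omega))
    obtain ⟨hba, hb⟩ := Finset.mem_erase.1 hb
    have hbmax : ∀ z ∈ S, z ≠ a → z ≠ b → r z b :=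
      fun z hz h1 h2 => hbmax z (Finset.mem_erase.2 ⟨h1, hz⟩) h2
    have hta : t a ≠ c := fun h => ax.asymm (hc a ha h b hb hba) (hamax b hb hba)
    have hm : MutualTop t S a b := by
      refine ⟨ha, hb, hba.symm, fun z hz h1 h2 => ?_, fun z hz h1 h2 => ?_⟩
      · rw [ax.hi a hta]; exact hbmax z hz h1 h2
      · have htb : t b ≠ c := fun h => ax.asymm (hc b hb h z hz h2) (hbmax z hz h1 h2)
        rw [ax.hi b htb]; exact hamax z hz h1
    refine Uniq.of_forced hm.forced hm.extends (ih _ ?_ ?_)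
    · have := card_del ha hb hba.symm; omega
    · intro z hz h y hy
      exact hc z (mem_del.1 hz).1 h y (mem_del.1 hy).1

/-! ### The two cases without mutual first choices -/

/-- The smallest person `m` and the largest person `a` prefer small partners, while the second
smallest person `m₂` prefers large ones. -/
theorem two_ends (ax : Axis t r c) (k : ℕ) (hS : S.card = 2 * (k + 1))
    (ih : ∀ S' : Finset ℕ, S'.card = 2 * k → OneOrTwo t S') {m m₂ a : ℕ}
    (hm : m ∈ S) (hm₂ : m₂ ∈ S) (ha : a ∈ S) (hmm₂ : m ≠ m₂) (hma : m ≠ a)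
    (hmin : ∀ z ∈ S, z ≠ m → r m z) (hmin₂ : ∀ z ∈ S, z ≠ m → z ≠ m₂ → r m₂ z)
    (hmax : ∀ z ∈ S, z ≠ a → r z a) (tm : t m = c) (tm₂ : t m₂ ≠ c) (ta : t a = c) :
    OneOrTwo t S := by
  have hm₂a : m₂ ≠ a := by rintro rfl; exact tm₂ ta
  -- otherwise `m₂` and `a` block: `m₂` ranks `a` first, and `a` ranks `m₂` right after `m`
  have split : ∀ M, IsStable t S M → {m, a} ∈ M ∨ {m₂, a} ∈ M := by
    intro M hM
    by_contra! hn
    obtain ⟨u, hu, hua, hau⟩ := hM.1.partner ha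
    obtain ⟨v, hv, hvm, hmv⟩ := hM.1.partner hm₂
    refine hM.not_block hm₂a hmv hau ((ax.hi _ tm₂ _ _).2 (hmax v hv ?_))
      ((ax.lo _ ta _ _).2 (hmin₂ u hu ?_ ?_))
    · rintro rfl; exact hn.2 hmv
    · rintro rfl; exact hn.1 (by rwa [Finset.pair_comm])
    · rintro rfl; exact hn.2 (by rwa [Finset.pair_comm])
  have ext₂ : Extends t S m₂ a := by
    intro M hM
    refine hM.extend hm₂ ha hm₂a ?_ ?_
    · intro z w hz h1 _
      have hz := mem_del.1 (hM.1.mem hz).1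
      rw [ax.hi _ tm₂] at h1
      exact ax.asymm h1 (hmax z hz.1 hz.2.2)
    · intro z w hz h1 h2
      have hw := mem_del.1 (hM.1.mem hz).2.1
      have hz := mem_del.1 (hM.1.mem hz).1
      rw [ax.lo _ ta] at h1
      by_cases hzm : z = m
      · subst hzm
        rw [ax.lo _ tm] at h2
        exact ax.asymm h2 (hmax w hw.1 hw.2.2)
      · exact ax.asymm h1 (hmin₂ z hz.1 hzm hz.2.1)
  have hcard₂ := card_del hm₂ ha hm₂a
  by_cases hex : ∃ z ∈ S, t z = c ∧ z ≠ m ∧ z ≠ a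
  · obtain ⟨z, hz, tz, hzm, hza⟩ := hex
    refine OneOrTwo.of_forced (x := m₂) (y := a) (fun M hM => ?_) ext₂ (ih _ (by omega))
    refine (split M hM).resolve_left fun hp => ?_
    -- `z` and `m` would block
    obtain ⟨w, hw, hwz, hzw⟩ := hM.1.partner hz
    refine hM.not_block hzm.symm hp hzw ((ax.lo _ tm _ _).2 (hmax z hz hza))
      ((ax.lo _ tz _ _).2 (hmin w hw ?_))
    rintro rfl
    exact hza (hM.1.unique (by rwa [Finset.pair_comm]) hp)
  · push Not at hex
    have hcard₁ := card_del hm ha hma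
    refine OneOrTwo.of_split split ?_ ext₂ ?_ ?_
    · intro M hM
      refine hM.extend hm ha hma ?_ ?_
      · intro z w hz _ h2
        have hw := mem_del.1 (hM.1.mem hz).2.1
        have hz := mem_del.1 (hM.1.mem hz).1
        have tz : t z ≠ c := fun h => hz.2.2 (hex z hz.1 h hz.2.1)
        rw [ax.hi _ tz] at h2
        exact ax.asymm h2 (hmin w hw.1 hw.2.1)
      · intro z w hz h1 _
        have hz := mem_del.1 (hM.1.mem hz).1
        rw [ax.lo _ ta] at h1
        exact ax.asymm h1 (hmin z hz.1 hz.2.1)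
    · refine uniq_of_hi ax k _ (by omega) fun z hz h => ?_
      have hz := mem_del.1 hz
      exact absurd (hex z hz.1 h hz.2.1) hz.2.2
    · refine uniq_of_hi ax k _ (by omega) fun z hz h y hy hyz => ?_
      have hz := mem_del.1 hz
      have hy := mem_del.1 hy
      have : z = m := by by_contra hne; exact hz.2.2 (hex z hz.1 h hne)
      subst this
      exact hmin y hy.1 hyz

/-- The data of the alternating case: `m`, `m₂` are the smallest and `a₂`, `a` the largest members
of `S`; `m` and `a₂` prefer small partners, `m₂` and `a` prefer large ones. -/
structure Alternating (t : ℕ → AttrType) (r : ℕ → ℕ → Prop) (c : AttrType) (S : Finset ℕ)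
    (m m₂ a₂ a : ℕ) : Prop where
  hm : m ∈ S
  hm₂ : m₂ ∈ S
  ha₂ : a₂ ∈ S
  ha : a ∈ S
  hmm₂ : m ≠ m₂
  hma₂ : m ≠ a₂
  hm₂a : m₂ ≠ a
  ha₂a : a₂ ≠ a
  hmin : ∀ z ∈ S, z ≠ m → r m z
  hmin₂ : ∀ z ∈ S, z ≠ m → z ≠ m₂ → r m₂ z
  hmax : ∀ z ∈ S, z ≠ a → r z a
  hmax₂ : ∀ z ∈ S, z ≠ a → z ≠ a₂ → r z a₂
  tm : t m = c
  tm₂ : t m₂ ≠ c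
  ta₂ : t a₂ = c
  ta : t a ≠ c

variable {m m₂ a₂ a : ℕ}

/-- One of the three pairs is matched, since otherwise `m₂` and `a₂` block. -/
theorem Alternating.split (ax : Axis t r c) (h : Alternating t r c S m m₂ a₂ a)
    (hM : IsStable t S M) : {m, a₂} ∈ M ∨ {m₂, a} ∈ M ∨ {m₂, a₂} ∈ M := by
  by_contra! hn
  obtain ⟨u, hu, hua, hau⟩ := hM.1.partner h.ha₂
  obtain ⟨v, hv, hvm, hmv⟩ := hM.1.partner h.hm₂
  have hm₂a₂ : m₂ ≠ a₂ := fun he => h.tm₂ (he ▸ h.ta₂)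
  refine hM.not_block hm₂a₂ hmv hau
    ((ax.hi _ h.tm₂ _ _).2 (h.hmax₂ v hv ?_ ?_)) ((ax.lo _ h.ta₂ _ _).2 (h.hmin₂ u hu ?_ ?_))
  · rintro rfl; exact hn.2.1 hmv
  · rintro rfl; exact hn.2.2 hmv
  · rintro rfl; exact hn.1 (by rwa [Finset.pair_comm])
  · rintro rfl; exact hn.2.2 (by rwa [Finset.pair_comm])

/-- If `m` and `a` are not matched to each other in any stable matching of the others, then
`{m₂, a₂}` can be added: the only people whom `m₂` or `a₂` would rather have are `a` and `m`. -/
theorem Alternating.extends (ax : Axis t r c) (h : Alternating t r c S m m₂ a₂ a)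
    (hne : ∀ M, IsStable t (del S m₂ a₂) M → {m, a} ∉ M) : Extends t S m₂ a₂ := by
  intro M hM
  refine hM.extend h.hm₂ h.ha₂ (fun he => h.tm₂ (he ▸ h.ta₂)) ?_ ?_
  · intro z w hp h1 h2
    have hw := mem_del.1 (hM.1.mem hp).2.1
    have hz := mem_del.1 (hM.1.mem hp).1
    rw [ax.hi _ h.tm₂] at h1
    by_cases hza : z = a
    · subst hza
      rw [ax.hi _ h.ta] at h2
      by_cases hwm : w = m
      · subst hwm
        exact hne M hM (by rwa [Finset.pair_comm])
      · exact ax.asymm h2 (h.hmin₂ w hw.1 hwm hw.2.1)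
    · exact ax.asymm h1 (h.hmax₂ z hz.1 hza hz.2.2)
  · intro z w hp h1 h2
    have hw := mem_del.1 (hM.1.mem hp).2.1
    have hz := mem_del.1 (hM.1.mem hp).1
    rw [ax.lo _ h.ta₂] at h1
    by_cases hzm : z = m
    · subst hzm
      rw [ax.lo _ h.tm] at h2
      by_cases hwa : w = a
      · subst hwa
        exact hne M hM hp
      · exact ax.asymm h2 (h.hmax₂ w hw.1 hwa hw.2.2)
    · exact ax.asymm h1 (h.hmin₂ z hz.1 hzm hz.2.1)

/-- A third person `z` preferring large partners would block the pair `{b, a}` together with the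
largest person `a`, who also prefers large partners. -/
theorem not_mem_of_hi (ax : Axis t r c) {b z : ℕ} (hM : IsStable t S M)
    (hmax : ∀ z ∈ S, z ≠ a → r z a) (ta : t a ≠ c) (hz : z ∈ S) (tz : t z ≠ c)
    (hbz : r b z) (hza : z ≠ a) : {b, a} ∉ M := by
  intro hp
  have hp' : {a, b} ∈ M := by rwa [Finset.pair_comm]
  obtain ⟨w, hw, hwz, hzw⟩ := hM.1.partner hz
  refine hM.not_block hza.symm hp' hzw ((ax.hi _ ta _ _).2 hbz) ((ax.hi _ tz _ _).2 (hmax w hw ?_))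
  rintro rfl
  have : z = b := hM.1.unique (by rwa [Finset.pair_comm]) hp'
  subst this
  exact ax.irrefl _ hbz

/-- Mirror image of `not_mem_of_hi`. -/
theorem not_mem_of_lo (ax : Axis t r c) {b z : ℕ} (hM : IsStable t S M)
    (hmin : ∀ z ∈ S, z ≠ m → r m z) (tm : t m = c) (hz : z ∈ S) (tz : t z = c)
    (hbz : r z b) (hzm : z ≠ m) : {m, b} ∉ M := by
  intro hp
  obtain ⟨w, hw, hwz, hzw⟩ := hM.1.partner hz
  refine hM.not_block hzm.symm hp hzw ((ax.lo _ tm _ _).2 hbz) ((ax.lo _ tz _ _).2 (hmin w hw ?_))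
  rintro rfl
  have : z = b := hM.1.unique (by rwa [Finset.pair_comm]) hp
  subst this
  exact ax.irrefl _ hbz

/-- The alternating case when only `m` and `a₂` prefer small partners. -/
theorem Alternating.exceptional (ax : Axis t r c) (h : Alternating t r c S m m₂ a₂ a) (k : ℕ)
    (hS : S.card = 2 * (k + 1)) (hlo : ∀ z ∈ S, t z = c → z = m ∨ z = a₂) : OneOrTwo t S := by
  have hm₂a₂ : m₂ ≠ a₂ := fun he => h.tm₂ (he ▸ h.ta₂)
  have hma : m ≠ a := fun he => h.ta (he ▸ h.tm)
  have ext₁ : Extends t S m a₂ := by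
    intro M hM
    refine hM.extend h.hm h.ha₂ h.hma₂ ?_ ?_
    · intro z w hz _ h2
      have hw := mem_del.1 (hM.1.mem hz).2.1
      have hz := mem_del.1 (hM.1.mem hz).1
      have tz : t z ≠ c := fun ht => by rcases hlo z hz.1 ht with h | h <;> tauto
      rw [ax.hi _ tz] at h2
      exact ax.asymm h2 (h.hmin w hw.1 hw.2.1)
    · intro z w hz h1 _
      have hz := mem_del.1 (hM.1.mem hz).1
      rw [ax.lo _ h.ta₂] at h1
      exact ax.asymm h1 (h.hmin z hz.1 hz.2.1)
  have uniq₁ : Uniq t (del S m a₂) := by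
    have := card_del h.hm h.ha₂ h.hma₂
    refine uniq_of_hi ax k _ (by omega) fun z hz ht => ?_
    have hz := mem_del.1 hz
    rcases hlo z hz.1 ht with h | h <;> tauto
  by_cases hex : ∃ z ∈ S, z ≠ m ∧ z ≠ m₂ ∧ z ≠ a₂ ∧ z ≠ a
  · obtain ⟨z, hz, hzm, hzm₂, hza₂, hza⟩ := hex
    have tz : t z ≠ c := fun ht => by rcases hlo z hz ht with h | h <;> tauto
    refine OneOrTwo.of_split (x := m) (y := a₂) (u := m₂) (v := a₂) ?_ ext₁ (h.extends ax ?_) uniq₁ ?_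
    · intro M hM
      have := not_mem_of_hi ax hM h.hmax h.ta hz tz (h.hmin₂ z hz hzm hzm₂) hza
      have := h.split ax hM
      tauto
    · intro M hM
      exact not_mem_of_hi ax hM (fun y hy => h.hmax y (mem_del.1 hy).1) h.ta
        (mem_del.2 ⟨hz, hzm₂, hza₂⟩) tz (h.hmin z hz hzm) hza
    · have := card_del h.hm₂ h.ha₂ hm₂a₂
      refine uniq_of_hi ax k _ (by omega) fun z hz ht y hy hyz => ?_
      have hz := mem_del.1 hz
      have : z = m := by rcases hlo z hz.1 ht with h | h <;> tauto
      subst this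
      exact h.hmin y (mem_del.1 hy).1 hyz
  · -- four people: each of the other two matchings has a blocking pair
    push Not at hex
    refine (Uniq.of_forced (x := m) (y := a₂) (fun M hM => ?_) ext₁ uniq₁).oneOrTwo
    obtain ⟨u, hu, hum, hmu⟩ := hM.1.partner h.hm
    have hum' : {u, m} ∈ M := by rwa [Finset.pair_comm]
    rcases h.split ax hM with hp | hp | hp
    · exact hp
    · have hp' : {a, m₂} ∈ M := by rwa [Finset.pair_comm]
      have h1 : u ≠ m₂ := by rintro rfl; exact hma (hM.1.unique hum' hp)
      have h2 : u ≠ a := by rintro rfl; exact h.hmm₂ (hM.1.unique hum' hp')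
      have : u = a₂ := by by_contra h3; exact h2 (hex u hu hum h1 h3)
      rwa [← this]
    · have hp' : {a₂, m₂} ∈ M := by rwa [Finset.pair_comm]
      have h1 : u ≠ m₂ := by rintro rfl; exact h.hma₂ (hM.1.unique hum' hp)
      have h2 : u ≠ a₂ := by rintro rfl; exact h.hmm₂ (hM.1.unique hum' hp')
      have : u = a := hex u hu hum h1 h2
      subst this
      exact (hM.not_block h.hm₂a hp hum' ((ax.hi _ h.tm₂ _ _).2 (h.hmax _ h.ha₂ h.ha₂a))
        ((ax.hi _ h.ta _ _).2 (h.hmin _ h.hm₂ h.hmm₂.symm))).elim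

theorem ne_B_iff {x : AttrType} : x ≠ AttrType.B ↔ x = AttrType.A := by cases x <;> simp

theorem ne_A_iff {x : AttrType} : x ≠ AttrType.A ↔ x = AttrType.B := by cases x <;> simp

theorem alternating (k : ℕ) (hS : S.card = 2 * (k + 1))
    (ih : ∀ S' : Finset ℕ, S'.card = 2 * k → OneOrTwo t S')
    (h : Alternating t (· < ·) AttrType.A S m m₂ a₂ a) : OneOrTwo t S := by
  have ax := axis_lt t
  have hm₂a₂ : m₂ ≠ a₂ := fun he => h.tm₂ (he ▸ h.ta₂)
  by_cases hA : ∀ z ∈ S, t z = AttrType.A → z = m ∨ z = a₂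
  · exact h.exceptional ax k hS hA
  by_cases hB : ∀ z ∈ S, t z = AttrType.B → z = a ∨ z = m₂
  · have h' : Alternating t (fun x y => y < x) AttrType.B S a a₂ m₂ m :=
      { hm := h.ha, hm₂ := h.ha₂, ha₂ := h.hm₂, ha := h.hm, hmm₂ := h.ha₂a.symm,
        hma₂ := h.hm₂a.symm, hm₂a := h.hma₂.symm, ha₂a := h.hmm₂.symm, hmin := h.hmax,
        hmin₂ := h.hmax₂, hmax := h.hmin, hmax₂ := h.hmin₂, tm := ne_A_iff.1 h.ta,
        tm₂ := ne_B_iff.2 h.ta₂, ta₂ := ne_A_iff.1 h.tm₂, ta := ne_B_iff.2 h.tm }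
    exact h'.exceptional (axis_gt t) k hS hB
  push Not at hA hB
  obtain ⟨z, hz, tz, hzm, hza₂⟩ := hA
  obtain ⟨w, hw, tw, hwa, hwm₂⟩ := hB
  have hza : z ≠ a := by rintro rfl; exact h.ta tz
  have hzm₂ : z ≠ m₂ := by rintro rfl; exact h.tm₂ tz
  have hwm : w ≠ m := by rintro rfl; exact ne_A_iff.2 tw h.tm
  have hcard := card_del h.hm₂ h.ha₂ hm₂a₂
  refine OneOrTwo.of_forced (x := m₂) (y := a₂) (fun M hM => ?_) (h.extends ax ?_) (ih _ (by omega))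
  · have h1 := not_mem_of_lo ax hM h.hmin h.tm hz tz (h.hmax₂ z hz hza hza₂) hzm
    have h2 := not_mem_of_hi ax hM h.hmax h.ta hw (ne_A_iff.2 tw) (h.hmin₂ w hw hwm hwm₂) hwa
    have := h.split ax hM
    tauto
  · intro M hM
    exact not_mem_of_lo ax hM (fun y hy => h.hmin y (mem_del.1 hy).1) h.tm
      (mem_del.2 ⟨hz, hzm₂, hza₂⟩) tz (h.hmax z hz hza) hzm

/-! ### The induction -/

theorem oneOrTwo (t : ℕ → AttrType) (k : ℕ) :
    ∀ S : Finset ℕ, S.card = 2 * k → OneOrTwo t S := by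
  have ax := axis_lt t
  have ax' := axis_gt t
  induction k with
  | zero =>
    intro S hS
    rw [Finset.card_eq_zero.1 (by omega : S.card = 0)]
    exact (uniq_empty t).oneOrTwo
  | succ k ih =>
    intro S hS
    have of_mutual : ∀ x y, MutualTop t S x y → OneOrTwo t S := fun x y h => by
      have := card_del h.left_mem h.right_mem h.ne
      exact OneOrTwo.of_forced h.forced h.extends (ih _ (by omega))
    obtain ⟨m, hm, hmin⟩ := ax.exists_min S (Finset.card_pos.1 (by omega))
    obtain ⟨a, ha, hmax⟩ := ax.exists_max S (Finset.card_pos.1 (by omega))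
    have hcm := Finset.card_erase_add_one hm
    have hca := Finset.card_erase_add_one ha
    obtain ⟨m₂, hm₂, hmin₂⟩ := ax.exists_min (S.erase m) (Finset.card_pos.1 (by omega))
    obtain ⟨a₂, ha₂, hmax₂⟩ := ax.exists_max (S.erase a) (Finset.card_pos.1 (by omega))
    obtain ⟨hm₂m, hm₂⟩ := Finset.mem_erase.1 hm₂
    obtain ⟨ha₂a, ha₂⟩ := Finset.mem_erase.1 ha₂
    replace hmin₂ : ∀ z ∈ S, z ≠ m → z ≠ m₂ → m₂ < z :=
      fun z hz h1 h2 => hmin₂ z (Finset.mem_erase.2 ⟨h1, hz⟩) h2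
    replace hmax₂ : ∀ z ∈ S, z ≠ a → z ≠ a₂ → z < a₂ :=
      fun z hz h1 h2 => hmax₂ z (Finset.mem_erase.2 ⟨h1, hz⟩) h2
    have hma : m ≠ a := by
      rintro rfl
      exact ax.asymm (hmin m₂ hm₂ hm₂m) (hmax m₂ hm₂ hm₂m)
    by_cases hex : ∀ z ∈ S, z = m ∨ z = a
    · exact of_mutual m a ⟨hm, ha, hma, fun z hz h1 h2 => by have := hex z hz; tauto,
        fun z hz h1 h2 => by have := hex z hz; tauto⟩
    push Not at hex
    obtain ⟨z₀, hz₀, hz₀m, hz₀a⟩ := hex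
    have hm₂a : m₂ ≠ a := by
      rintro rfl
      exact ax.asymm (hmin₂ z₀ hz₀ hz₀m hz₀a) (hmax z₀ hz₀ hz₀a)
    have hma₂ : m ≠ a₂ := by
      rintro rfl
      exact ax.asymm (hmin z₀ hz₀ hz₀m) (hmax₂ z₀ hz₀ hz₀a hz₀m)
    by_cases tm : t m = AttrType.A
    · by_cases tm₂ : t m₂ = AttrType.A
      · exact of_mutual m m₂ ⟨hm, hm₂, hm₂m.symm,
          fun z hz h1 h2 => (ax.lo _ tm _ _).2 (hmin₂ z hz h1 h2),
          fun z hz h1 h2 => (ax.lo _ tm₂ _ _).2 (hmin z hz h1)⟩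
      by_cases ta : t a = AttrType.A
      · exact two_ends ax k hS ih hm hm₂ ha hm₂m.symm hma hmin hmin₂ hmax tm tm₂ ta
      by_cases ta₂ : t a₂ = AttrType.A
      · exact alternating k hS ih ⟨hm, hm₂, ha₂, ha, hm₂m.symm, hma₂, hm₂a, ha₂a, hmin, hmin₂,
          hmax, hmax₂, tm, tm₂, ta₂, ta⟩
      · exact of_mutual a a₂ ⟨ha, ha₂, ha₂a.symm,
          fun z hz h1 h2 => (ax.hi _ ta _ _).2 (hmax₂ z hz h1 h2),
          fun z hz h1 h2 => (ax.hi _ ta₂ _ _).2 (hmax z hz h1)⟩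
    · by_cases ta : t a = AttrType.A
      · exact of_mutual m a ⟨hm, ha, hma,
          fun z hz h1 h2 => (ax.hi _ tm _ _).2 (hmax z hz h2),
          fun z hz h1 h2 => (ax.lo _ ta _ _).2 (hmin z hz h1)⟩
      by_cases ta₂ : t a₂ = AttrType.A
      · exact two_ends ax' k hS ih ha ha₂ hm ha₂a.symm hma.symm hmax hmax₂ hmin
          (ne_A_iff.1 ta) (ne_B_iff.2 ta₂) (ne_A_iff.1 tm)
      · exact of_mutual a a₂ ⟨ha, ha₂, ha₂a.symm,
          fun z hz h1 h2 => (ax.hi _ ta _ _).2 (hmax₂ z hz h1 h2),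
          fun z hz h1 h2 => (ax.hi _ ta₂ _ _).2 (hmax z hz h1)⟩

end OneAttribute

/-- Every 1-attribute stable roommate instance on `2*n` people (`n ≥ 1`)
has either exactly one or exactly two stable matchings. -/
theorem one_attribute_one_or_two_stable_matchings (n : ℕ) (hn : 1 ≤ n) (t : ℕ → AttrType) :
    {M : Finset (Finset ℕ) | IsStable t (Finset.Icc 1 (2 * n)) M}.ncard = 1 ∨
    {M : Finset (Finset ℕ) | IsStable t (Finset.Icc 1 (2 * n)) M}.ncard = 2 := by
  obtain ⟨M₁, M₂, h⟩ := oneOrTwo t n (Finset.Icc 1 (2 * n)) (by simp)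
  have hset : {M : Finset (Finset ℕ) | IsStable t (Finset.Icc 1 (2 * n)) M} = {M₁, M₂} := by
    ext M; simp [h]
  rw [hset]
  by_cases he : M₁ = M₂
  · left; simp [he]
  · right; exact Set.ncard_pair he
end

section
/- For every n ≥ 1 and every type assignment t : {1,…,2n} → {A,B}, the 1-attribute stable roommate instance determined by t has at least one stable matching. -/
theorem IsMatching.exists_partner {S : Finset ℕ} {M : Finset (Finset ℕ)} (h : IsMatching S M)
    {x : ℕ} (hx : x ∈ S) : ∃ y ∈ S, y ≠ x ∧ ({x, y} : Finset ℕ) ∈ M := by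
  obtain ⟨P, ⟨hP, hxP⟩, -⟩ := h.2 x hx
  obtain ⟨i, j, hij, hi, hj, rfl⟩ := h.1 P hP
  rcases (by simpa using hxP : x = i ∨ x = j) with rfl | rfl
  · exact ⟨j, hj, hij.symm, hP⟩
  · exact ⟨i, hi, hij, by rwa [Finset.pair_comm]⟩

theorem IsBlocking.symm {t : ℕ → AttrType} {M : Finset (Finset ℕ)} {i j : ℕ}
    (h : IsBlocking t M i j) : IsBlocking t M j i :=
  ⟨h.1.symm, by rw [Finset.pair_comm]; exact h.2.1, h.2.2.2, h.2.2.1⟩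

theorem IsMatching.insert_pair {S : Finset ℕ} {M : Finset (Finset ℕ)} {p q : ℕ}
    (hp : p ∈ S) (hq : q ∈ S) (hpq : p ≠ q) (h : IsMatching (S \ {p, q}) M) :
    IsMatching S (insert {p, q} M) := by
  have hsub : ∀ P ∈ M, ∀ x ∈ P, x ∈ S \ {p, q} := by
    intro P hP x hx
    obtain ⟨i, j, -, hi, hj, rfl⟩ := h.1 P hP
    rcases (by simpa using hx : x = i ∨ x = j) with rfl | rfl <;> assumption
  refine ⟨?_, ?_⟩
  · intro P hP
    rcases Finset.mem_insert.1 hP with rfl | hP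
    · exact ⟨p, q, hpq, hp, hq, rfl⟩
    · obtain ⟨i, j, hij, hi, hj, rfl⟩ := h.1 P hP
      exact ⟨i, j, hij, (Finset.mem_sdiff.1 hi).1, (Finset.mem_sdiff.1 hj).1, rfl⟩
  · intro i hi
    by_cases hipq : i ∈ ({p, q} : Finset ℕ)
    · refine ⟨{p, q}, ⟨Finset.mem_insert_self _ _, hipq⟩, ?_⟩
      rintro P ⟨hP, hiP⟩
      rcases Finset.mem_insert.1 hP with rfl | hP
      · rfl
      · exact absurd hipq (Finset.mem_sdiff.1 (hsub P hP i hiP)).2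
    · obtain ⟨P, ⟨hP, hiP⟩, huniq⟩ := h.2 i (Finset.mem_sdiff.2 ⟨hi, hipq⟩)
      refine ⟨P, ⟨Finset.mem_insert_of_mem hP, hiP⟩, ?_⟩
      rintro Q ⟨hQ, hiQ⟩
      rcases Finset.mem_insert.1 hQ with rfl | hQ
      · exact absurd hiQ hipq
      · exact huniq Q ⟨hQ, hiQ⟩

/-- A pair `{p, q}` can be added to a stable matching of the other people if, whoever the others are
matched with among themselves, nobody forms a blocking pair with `p` or with `q`. -/
theorem IsStable.insert_pair {t : ℕ → AttrType} {S : Finset ℕ} {M : Finset (Finset ℕ)} {p q : ℕ}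
    (hp : p ∈ S) (hq : q ∈ S) (hpq : p ≠ q)
    (Hp : ∀ x ∈ S \ {p, q}, ∀ y ∈ S \ {p, q}, y ≠ x → Prefers t p x q → ¬ Prefers t x p y)
    (Hq : ∀ x ∈ S \ {p, q}, ∀ y ∈ S \ {p, q}, y ≠ x → Prefers t q x p → ¬ Prefers t x q y)
    (h : IsStable t (S \ {p, q}) M) :
    IsStable t S (insert {p, q} M) := by
  have hmem : ({p, q} : Finset ℕ) ∈ insert ({p, q} : Finset ℕ) M := Finset.mem_insert_self _ _
  have hmem' : ({q, p} : Finset ℕ) ∈ insert ({p, q} : Finset ℕ) M :=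
    Finset.pair_comm p q ▸ Finset.mem_insert_self _ _
  have hP : ∀ x ∈ S \ {p, q}, ¬ IsBlocking t (insert {p, q} M) p x := by
    intro x hx hb
    obtain ⟨y, hy, hyx, hxy⟩ := h.1.exists_partner hx
    exact Hp x hx y hy hyx (hb.2.2.1 q hmem hpq.symm)
      (hb.2.2.2 y (Finset.mem_insert_of_mem hxy) hyx)
  have hQ : ∀ x ∈ S \ {p, q}, ¬ IsBlocking t (insert {p, q} M) q x := by
    intro x hx hb
    obtain ⟨y, hy, hyx, hxy⟩ := h.1.exists_partner hx
    exact Hq x hx y hy hyx (hb.2.2.1 p hmem' hpq)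
      (hb.2.2.2 y (Finset.mem_insert_of_mem hxy) hyx)
  have hPQ : ∀ i ∈ ({p, q} : Finset ℕ), ∀ j ∈ S, ¬ IsBlocking t (insert {p, q} M) i j := by
    intro i hi j hj hb
    by_cases hj' : j ∈ ({p, q} : Finset ℕ)
    · have hij := hb.1
      have hnot := hb.2.1
      simp only [Finset.mem_insert, Finset.mem_singleton] at hi hj'
      rcases hi with rfl | rfl <;> rcases hj' with rfl | rfl
      · exact hij rfl
      · exact hnot hmem
      · exact hnot hmem'
      · exact hij rfl
    · have hj'' := Finset.mem_sdiff.2 ⟨hj, hj'⟩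
      rcases (by simpa using hi : i = p ∨ i = q) with rfl | rfl
      · exact hP j hj'' hb
      · exact hQ j hj'' hb
  refine ⟨h.1.insert_pair hp hq hpq, ?_⟩
  intro i hi j hj hb
  by_cases hi' : i ∈ ({p, q} : Finset ℕ)
  · exact hPQ i hi' j hj hb
  by_cases hj' : j ∈ ({p, q} : Finset ℕ)
  · exact hPQ j hj' i hi hb.symm
  exact h.2 i (Finset.mem_sdiff.2 ⟨hi, hi'⟩) j (Finset.mem_sdiff.2 ⟨hj, hj'⟩)
    ⟨hb.1, fun hm => hb.2.1 (Finset.mem_insert_of_mem hm),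
      fun k hk => hb.2.2.1 k (Finset.mem_insert_of_mem hk),
      fun k hk => hb.2.2.2 k (Finset.mem_insert_of_mem hk)⟩

theorem prefers_of_A {t : ℕ → AttrType} {i : ℕ} (h : t i = AttrType.A) (j k : ℕ) :
    Prefers t i j k ↔ j < k := by
  simp [Prefers, h]

theorem prefers_of_B {t : ℕ → AttrType} {i : ℕ} (h : t i = AttrType.B) (j k : ℕ) :
    Prefers t i j k ↔ k < j := by
  simp [Prefers, h]

theorem AttrType.eq_A_or_eq_B (a : AttrType) : a = AttrType.A ∨ a = AttrType.B := by
  cases a <;> simp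

/-- Every set of at least two people contains a pair that meets the hypotheses of
`IsStable.insert_pair`. -/
theorem exists_safe_pair (t : ℕ → AttrType) (S : Finset ℕ) (hS : 1 < S.card) :
    ∃ p ∈ S, ∃ q ∈ S, p ≠ q ∧
      (∀ x ∈ S \ {p, q}, ∀ y ∈ S \ {p, q}, y ≠ x → Prefers t p x q → ¬ Prefers t x p y) ∧
      (∀ x ∈ S \ {p, q}, ∀ y ∈ S \ {p, q}, y ≠ x → Prefers t q x p → ¬ Prefers t x q y) := by
  have hne : S.Nonempty := Finset.card_pos.1 (by omega)
  obtain ⟨l, hl, hmin⟩ : ∃ l ∈ S, ∀ x ∈ S, l ≤ x :=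
    ⟨S.min' hne, S.min'_mem hne, fun x hx => S.min'_le x hx⟩
  obtain ⟨r, hr, hmax⟩ : ∃ r ∈ S, ∀ x ∈ S, x ≤ r :=
    ⟨S.max' hne, S.max'_mem hne, fun x hx => S.le_max' x hx⟩
  have hlr : l ≠ r := by
    rintro rfl
    obtain ⟨a, ha, b, hb, hab⟩ := Finset.one_lt_card.1 hS
    have := hmin a ha
    have := hmax a ha
    have := hmin b hb
    have := hmax b hb
    omega
  by_cases hA : t l = AttrType.A ∧ ∃ a ∈ S, a ≠ l ∧ t a = AttrType.A
  · obtain ⟨hlA, hex⟩ := hA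
    classical
    obtain ⟨haS, hal, haA⟩ := Nat.find_spec hex
    have hleast : ∀ x ∈ S, x ≠ l → t x = AttrType.A → Nat.find hex ≤ x :=
      fun x hx hxl hxA => Nat.find_min' hex ⟨hx, hxl, hxA⟩
    generalize Nat.find hex = a at haS hal haA hleast
    refine ⟨l, hl, a, haS, hal.symm, ?_, ?_⟩
    · intro x hx y hy _ h1 h2
      simp only [Finset.mem_sdiff, Finset.mem_insert, Finset.mem_singleton, not_or] at hx hy
      rw [prefers_of_A hlA] at h1
      rcases (t x).eq_A_or_eq_B with hxt | hxt
      · have := hleast x hx.1 hx.2.1 hxt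
        omega
      · rw [prefers_of_B hxt] at h2
        have := hmin y hy.1
        omega
    · intro x hx _ _ _ h1 _
      rw [prefers_of_A haA] at h1
      have := hmin x (Finset.mem_sdiff.1 hx).1
      omega
  by_cases hB : t r = AttrType.B ∧ ∃ b ∈ S, b ≠ r ∧ t b = AttrType.B
  · obtain ⟨hrB, c, hcS, hcr, hcB⟩ := hB
    obtain ⟨b, hb, hgreatest⟩ :=
      (S.filter fun x => x ≠ r ∧ t x = AttrType.B).exists_max_image id
        ⟨c, Finset.mem_filter.2 ⟨hcS, hcr, hcB⟩⟩
    obtain ⟨hbS, hbr, hbB⟩ := Finset.mem_filter.1 hb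
    refine ⟨r, hr, b, hbS, hbr.symm, ?_, ?_⟩
    · intro x hx y hy _ h1 h2
      simp only [Finset.mem_sdiff, Finset.mem_insert, Finset.mem_singleton, not_or] at hx hy
      rw [prefers_of_B hrB] at h1
      rcases (t x).eq_A_or_eq_B with hxt | hxt
      · rw [prefers_of_A hxt] at h2
        have := hmax y hy.1
        omega
      · have : x ≤ b := hgreatest x (Finset.mem_filter.2 ⟨hx.1, hx.2.1, hxt⟩)
        omega
    · intro x hx _ _ _ h1 _
      rw [prefers_of_B hbB] at h1
      have := hmax x (Finset.mem_sdiff.1 hx).1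
      omega
  · have key : ∀ x ∈ S \ {l, r}, t l = AttrType.B ∧ t r = AttrType.A := by
      intro x hx
      simp only [Finset.mem_sdiff, Finset.mem_insert, Finset.mem_singleton, not_or] at hx
      rcases (t l).eq_A_or_eq_B with h1 | h1 <;> rcases (t r).eq_A_or_eq_B with h2 | h2
      · exact absurd ⟨h1, r, hr, hlr.symm, h2⟩ hA
      -- A third person `x` would share its type with `l` or with `r`.
      · rcases (t x).eq_A_or_eq_B with h3 | h3
        · exact absurd ⟨h1, x, hx.1, hx.2.1, h3⟩ hA
        · exact absurd ⟨h2, x, hx.1, hx.2.2, h3⟩ hB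
      · exact ⟨h1, h2⟩
      · exact absurd ⟨h2, l, hl, hlr, h1⟩ hB
    refine ⟨l, hl, r, hr, hlr, ?_, ?_⟩
    · intro x hx _ _ _ h1 _
      rw [prefers_of_B (key x hx).1] at h1
      have := hmax x (Finset.mem_sdiff.1 hx).1
      omega
    · intro x hx _ _ _ h1 _
      rw [prefers_of_A (key x hx).2] at h1
      have := hmin x (Finset.mem_sdiff.1 hx).1
      omega

theorem exists_stable_of_card (t : ℕ → AttrType) (m : ℕ) :
    ∀ S : Finset ℕ, S.card = 2 * m → ∃ M, IsStable t S M := by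
  induction m with
  | zero =>
    intro S hS
    obtain rfl : S = ∅ := Finset.card_eq_zero.1 (by omega)
    exact ⟨∅, ⟨by simp, by simp⟩, by simp⟩
  | succ m ih =>
    intro S hS
    obtain ⟨p, hp, q, hq, hpq, Hp, Hq⟩ := exists_safe_pair t S (by omega)
    have hsub : ({p, q} : Finset ℕ) ⊆ S := by
      simp [Finset.insert_subset_iff, hp, hq]
    obtain ⟨M, hM⟩ := ih (S \ {p, q}) (by
      rw [Finset.card_sdiff_of_subset hsub, Finset.card_pair hpq]
      omega)
    exact ⟨_, hM.insert_pair hp hq hpq Hp Hq⟩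

/-- Every 1-attribute stable roommate instance on `2*n` people (`n ≥ 1`)
has at least one stable matching. -/
theorem one_attribute_exists_stable_matching (n : ℕ) (hn : 1 ≤ n) (t : ℕ → AttrType) :
    ∃ M : Finset (Finset ℕ), IsStable t (Finset.Icc 1 (2 * n)) M := by
  exact exists_stable_of_card t n _ (by simp)
end

section
/- Let n ≥ 2 and let t : {1,…,2n} → {A,B} be a type assignment with t(1)=A and t(2)=A. Then persons 1 and 2 are each other's most-preferred person, every stable matching of the instance contains the pair {1,2}, and the stable matchings of the instance are exactly the sets M' ∪ {{1,2}} where M' ranges over the stable matchings of the restricted 1-attribute instance on {3,…,2n}. -/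
theorem IsMatching.mem_of_mem {S : Finset ℕ} {M : Finset (Finset ℕ)} (h : IsMatching S M)
    {p : Finset ℕ} (hp : p ∈ M) {x : ℕ} (hx : x ∈ p) : x ∈ S := by
  obtain ⟨i, j, -, hi, hj, rfl⟩ := h.1 p hp
  simp only [Finset.mem_insert, Finset.mem_singleton] at hx
  rcases hx with rfl | rfl <;> assumption

theorem IsMatching.eq_of_mem {S : Finset ℕ} {M : Finset (Finset ℕ)} (h : IsMatching S M)
    {p q : Finset ℕ} (hp : p ∈ M) (hq : q ∈ M) {x : ℕ} (hxp : x ∈ p) (hxq : x ∈ q) : p = q :=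
  (h.2 x (h.mem_of_mem hp hxp)).unique ⟨hp, hxp⟩ ⟨hq, hxq⟩

/-- A pair with a member `i ≥ 3` is not `{1, 2}`, so adding `{1, 2}` to `M` does not affect
whether it is matched. -/
theorem pair_mem_union_iff (M : Finset (Finset ℕ)) {i : ℕ} (hi : 3 ≤ i) (k : ℕ) :
    ({i, k} : Finset ℕ) ∈ M ∪ {({1, 2} : Finset ℕ)} ↔ ({i, k} : Finset ℕ) ∈ M := by
  have hne : ({i, k} : Finset ℕ) ≠ {1, 2} := by
    intro h
    have hmem : i ∈ ({1, 2} : Finset ℕ) := h ▸ Finset.mem_insert_self i {k}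
    simp only [Finset.mem_insert, Finset.mem_singleton] at hmem
    omega
  simp [hne]

theorem isBlocking_union_iff (t : ℕ → AttrType) (M : Finset (Finset ℕ)) {i j : ℕ}
    (hi : 3 ≤ i) (hj : 3 ≤ j) :
    IsBlocking t (M ∪ {({1, 2} : Finset ℕ)}) i j ↔ IsBlocking t M i j := by
  simp only [IsBlocking, pair_mem_union_iff M hi, pair_mem_union_iff M hj]

/-- Neither 1 nor 2 takes part in a blocking pair of a matching in which they are partners. -/
theorem three_le_of_isBlocking {t : ℕ → AttrType} (h1 : t 1 = AttrType.A)
    (h2 : t 2 = AttrType.A) {M : Finset (Finset ℕ)} (hM : ({1, 2} : Finset ℕ) ∈ M) {i j : ℕ}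
    (hi : 1 ≤ i) (hj : 1 ≤ j) (h : IsBlocking t M i j) : 3 ≤ i := by
  obtain ⟨hne, -, hb, -⟩ := h
  by_contra hlt
  obtain rfl | rfl : i = 1 ∨ i = 2 := by omega
  · have := (prefers_of_A h1 _ _).1 (hb 2 hM (by norm_num))
    omega
  · have := (prefers_of_A h2 _ _).1 (hb 1 (by rwa [Finset.pair_comm]) (by norm_num))
    omega

theorem pair_mem_of_isStable {n : ℕ} (hn : 2 ≤ n) {t : ℕ → AttrType}
    (h1 : t 1 = AttrType.A) (h2 : t 2 = AttrType.A) {M : Finset (Finset ℕ)}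
    (hM : IsStable t (Finset.Icc 1 (2 * n)) M) : ({1, 2} : Finset ℕ) ∈ M := by
  by_contra hnot
  refine hM.2 1 (Finset.mem_Icc.2 (by omega)) 2 (Finset.mem_Icc.2 (by omega))
    ⟨by norm_num, hnot, fun k hk hk1 => ?_, fun k hk hk2 => ?_⟩
  · have hkS := Finset.mem_Icc.1 (hM.1.mem_of_mem hk (x := k) (by simp))
    have hk2 : k ≠ 2 := by
      rintro rfl
      exact hnot hk
    exact (prefers_of_A h1 _ _).2 (by omega)
  · have hkS := Finset.mem_Icc.1 (hM.1.mem_of_mem hk (x := k) (by simp))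
    have hk1 : k ≠ 1 := by
      rintro rfl
      exact hnot (by rwa [Finset.pair_comm])
    exact (prefers_of_A h2 _ _).2 (by omega)

theorem IsMatching.erase_pair {n : ℕ} {M : Finset (Finset ℕ)}
    (h : IsMatching (Finset.Icc 1 (2 * n)) M) (hM : ({1, 2} : Finset ℕ) ∈ M) :
    IsMatching (Finset.Icc 3 (2 * n)) (M.erase {1, 2}) := by
  have key : ∀ p ∈ M.erase {1, 2}, ∀ x ∈ p, x ∈ Finset.Icc 3 (2 * n) := by
    intro p hp x hx
    obtain ⟨hne, hpM⟩ := Finset.mem_erase.1 hp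
    have hxS := Finset.mem_Icc.1 (h.mem_of_mem hpM hx)
    have hx12 : x ∉ ({1, 2} : Finset ℕ) := fun hx' => hne (h.eq_of_mem hpM hM hx hx')
    simp only [Finset.mem_insert, Finset.mem_singleton] at hx12
    exact Finset.mem_Icc.2 (by omega)
  refine ⟨fun p hp => ?_, fun i hi => ?_⟩
  · obtain ⟨i, j, hij, -, -, rfl⟩ := h.1 p (Finset.mem_of_mem_erase hp)
    exact ⟨i, j, hij, key _ hp i (by simp), key _ hp j (by simp), rfl⟩
  · rw [Finset.mem_Icc] at hi
    obtain ⟨p, ⟨hp, hip⟩, huniq⟩ := h.2 i (Finset.mem_Icc.2 (by omega))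
    refine ⟨p, ⟨Finset.mem_erase.2 ⟨?_, hp⟩, hip⟩,
      fun q hq => huniq q ⟨Finset.mem_of_mem_erase hq.1, hq.2⟩⟩
    rintro rfl
    simp only [Finset.mem_insert, Finset.mem_singleton] at hip
    omega

theorem IsMatching.union_pair {n : ℕ} (hn : 2 ≤ n) {M : Finset (Finset ℕ)}
    (h : IsMatching (Finset.Icc 3 (2 * n)) M) :
    IsMatching (Finset.Icc 1 (2 * n)) (M ∪ {({1, 2} : Finset ℕ)}) := by
  refine ⟨fun p hp => ?_, fun i hi => ?_⟩
  · rcases Finset.mem_union.1 hp with hp | hp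
    · obtain ⟨i, j, hij, hi, hj, rfl⟩ := h.1 p hp
      rw [Finset.mem_Icc] at hi hj
      exact ⟨i, j, hij, Finset.mem_Icc.2 (by omega), Finset.mem_Icc.2 (by omega), rfl⟩
    · exact ⟨1, 2, by norm_num, Finset.mem_Icc.2 (by omega), Finset.mem_Icc.2 (by omega),
        Finset.mem_singleton.1 hp⟩
  · rw [Finset.mem_Icc] at hi
    by_cases h3 : 3 ≤ i
    · obtain ⟨p, ⟨hp, hip⟩, huniq⟩ := h.2 i (Finset.mem_Icc.2 (by omega))
      refine ⟨p, ⟨Finset.mem_union_left _ hp, hip⟩, ?_⟩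
      rintro q ⟨hq, hiq⟩
      rcases Finset.mem_union.1 hq with hq | hq
      · exact huniq q ⟨hq, hiq⟩
      · rw [Finset.mem_singleton.1 hq] at hiq
        simp only [Finset.mem_insert, Finset.mem_singleton] at hiq
        omega
    · refine ⟨{1, 2}, ⟨by simp, ?_⟩, ?_⟩
      · simp only [Finset.mem_insert, Finset.mem_singleton]
        omega
      · rintro q ⟨hq, hiq⟩
        rcases Finset.mem_union.1 hq with hq | hq
        · exact absurd (Finset.mem_Icc.1 (h.mem_of_mem hq hiq)).1 h3
        · exact Finset.mem_singleton.1 hq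

/-- Case (T1): if persons 1 and 2 both have type A, they are each other's
most-preferred person, every stable matching contains the pair {1,2}, and
the stable matchings are exactly the stable matchings of the restricted
instance on {3,…,2n} together with the pair {1,2}. -/
theorem one_attribute_case_AA (n : ℕ) (hn : 2 ≤ n) (t : ℕ → AttrType)
    (h1 : t 1 = AttrType.A) (h2 : t 2 = AttrType.A) :
    (∀ k ∈ Finset.Icc 1 (2 * n), k ≠ 1 → k ≠ 2 →
      Prefers t 1 2 k ∧ Prefers t 2 1 k) ∧
    (∀ M : Finset (Finset ℕ), IsStable t (Finset.Icc 1 (2 * n)) M →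
      ({1, 2} : Finset ℕ) ∈ M) ∧
    (∀ M : Finset (Finset ℕ), IsStable t (Finset.Icc 1 (2 * n)) M ↔
      ∃ M' : Finset (Finset ℕ), IsStable t (Finset.Icc 3 (2 * n)) M' ∧
        M = M' ∪ {({1, 2} : Finset ℕ)}) := by
  refine ⟨fun k hk hk1 hk2 => ?_, fun M hM => pair_mem_of_isStable hn h1 h2 hM,
    fun M => ⟨fun hM => ?_, ?_⟩⟩
  · rw [Finset.mem_Icc] at hk
    exact ⟨(prefers_of_A h1 _ _).2 (by omega), (prefers_of_A h2 _ _).2 (by omega)⟩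
  · have hmem := pair_mem_of_isStable hn h1 h2 hM
    have hU : M = M.erase {1, 2} ∪ {({1, 2} : Finset ℕ)} := by
      rw [Finset.union_comm, ← Finset.insert_eq, Finset.insert_erase hmem]
    refine ⟨M.erase {1, 2}, ⟨hM.1.erase_pair hmem, fun i hi j hj hb => ?_⟩, hU⟩
    rw [Finset.mem_Icc] at hi hj
    rw [← isBlocking_union_iff t _ hi.1 hj.1, ← hU] at hb
    exact hM.2 i (Finset.mem_Icc.2 (by omega)) j (Finset.mem_Icc.2 (by omega)) hb
  · rintro ⟨M', hM', rfl⟩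
    refine ⟨hM'.1.union_pair hn, fun i hi j hj hb => ?_⟩
    rw [Finset.mem_Icc] at hi hj
    have hi3 := three_le_of_isBlocking h1 h2 (by simp) hi.1 hj.1 hb
    have hj3 := three_le_of_isBlocking h1 h2 (by simp) hj.1 hi.1 hb.symm
    exact hM'.2 i (Finset.mem_Icc.2 ⟨hi3, hi.2⟩) j (Finset.mem_Icc.2 ⟨hj3, hj.2⟩)
      ((isBlocking_union_iff t M' hi3 hj3).1 hb)
end

section
/- Let n ≥ 3 and let t : {1,…,2n} → {A,B} be a type assignment with t(1)=A, t(2)=B, t(2n−2)=B, t(2n−1)=A, and t(2n)=B. Then every stable matching of the instance contains the pair {2n−2,2n}, and the stable matchings of the instance are exactly the sets M' ∪ {{2n−2,2n}} where M' ranges over the stable matchings of the restricted 1-attribute instance on {1,…,2n−3} ∪ {2n−1}. -/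
theorem prefers_A {t : ℕ → AttrType} {i j k : ℕ} (h : t i = AttrType.A) :
    Prefers t i j k ↔ j < k := by
  simp [Prefers, h]

theorem prefers_B {t : ℕ → AttrType} {i j k : ℕ} (h : t i = AttrType.B) :
    Prefers t i j k ↔ k < j := by
  simp [Prefers, h]

theorem IsMatching.exists_partner_s14 {S : Finset ℕ} {M : Finset (Finset ℕ)} (h : IsMatching S M)
    {i : ℕ} (hi : i ∈ S) :
    ∃ k ∈ S, k ≠ i ∧ ({i, k} : Finset ℕ) ∈ M ∧ ∀ k', ({i, k'} : Finset ℕ) ∈ M → k' = k := by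
  obtain ⟨p, ⟨hp, hip⟩, huniq⟩ := h.2 i hi
  have key : ∃ k ∈ S, k ≠ i ∧ p = {i, k} := by
    obtain ⟨x, y, hxy, hx, hy, rfl⟩ := h.1 p hp
    rcases Finset.mem_insert.1 hip with rfl | hiy
    · exact ⟨y, hy, hxy.symm, rfl⟩
    · obtain rfl := Finset.mem_singleton.1 hiy
      exact ⟨x, hx, hxy, Finset.pair_comm _ _⟩
  obtain ⟨k, hk, hki, rfl⟩ := key
  refine ⟨k, hk, hki, hp, fun k' hk' => ?_⟩
  have he := huniq {i, k'} ⟨hk', by simp⟩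
  have hmem : k ∈ ({i, k'} : Finset ℕ) := by rw [he]; simp
  simp only [Finset.mem_insert, Finset.mem_singleton] at hmem
  exact (hmem.resolve_left hki).symm

theorem IsMatching.subset {S : Finset ℕ} {M : Finset (Finset ℕ)} (h : IsMatching S M)
    {p : Finset ℕ} (hp : p ∈ M) : p ⊆ S := by
  obtain ⟨x, y, -, hx, hy, rfl⟩ := h.1 p hp
  intro z hz
  simp only [Finset.mem_insert, Finset.mem_singleton] at hz
  rcases hz with rfl | rfl <;> assumption

theorem IsMatching.union_pair_s14 {S : Finset ℕ} {M : Finset (Finset ℕ)} (h : IsMatching S M)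
    {a b : ℕ} (hab : a ≠ b) (ha : a ∉ S) (hb : b ∉ S) :
    IsMatching (insert a (insert b S)) (M ∪ {({a, b} : Finset ℕ)}) := by
  constructor
  · intro p hp
    rcases Finset.mem_union.1 hp with hp | hp
    · obtain ⟨x, y, hxy, hx, hy, rfl⟩ := h.1 p hp
      exact ⟨x, y, hxy, by simp [hx], by simp [hy], rfl⟩
    · exact ⟨a, b, hab, by simp, by simp, Finset.mem_singleton.1 hp⟩
  · intro i hi
    by_cases his : i ∈ S
    · obtain ⟨p, ⟨hp, hip⟩, huniq⟩ := h.2 i his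
      refine ⟨p, ⟨by simp [hp], hip⟩, ?_⟩
      rintro q ⟨hq, hiq⟩
      rcases Finset.mem_union.1 hq with hq | hq
      · exact huniq q ⟨hq, hiq⟩
      · rw [Finset.mem_singleton.1 hq] at hiq
        simp only [Finset.mem_insert, Finset.mem_singleton] at hiq
        rcases hiq with rfl | rfl <;> contradiction
    · have hiab : i ∈ ({a, b} : Finset ℕ) := by
        simp only [Finset.mem_insert, Finset.mem_singleton] at hi ⊢
        tauto
      refine ⟨{a, b}, ⟨by simp, hiab⟩, ?_⟩
      rintro q ⟨hq, hiq⟩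
      rcases Finset.mem_union.1 hq with hq | hq
      · exact absurd (h.subset hq hiq) his
      · exact Finset.mem_singleton.1 hq

theorem IsMatching.erase_pair_s14 {S : Finset ℕ} {M : Finset (Finset ℕ)} {a b : ℕ}
    (h : IsMatching (insert a (insert b S)) M) (ha : a ∉ S) (hb : b ∉ S)
    (hM : ({a, b} : Finset ℕ) ∈ M) : IsMatching S (M.erase {a, b}) := by
  have hout : ∀ p ∈ M, p ≠ {a, b} → a ∉ p ∧ b ∉ p := by
    intro p hp hne
    constructor <;> intro hx <;> apply hne
    · exact (h.2 a (by simp)).unique ⟨hp, hx⟩ ⟨hM, by simp⟩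
    · exact (h.2 b (by simp)).unique ⟨hp, hx⟩ ⟨hM, by simp⟩
  constructor
  · intro p hp
    obtain ⟨hne, hp⟩ := Finset.mem_erase.1 hp
    obtain ⟨x, y, hxy, hx, hy, rfl⟩ := h.1 p hp
    obtain ⟨h1, h2⟩ := hout _ hp hne
    simp only [Finset.mem_insert, Finset.mem_singleton] at h1 h2 hx hy
    exact ⟨x, y, hxy, by grind, by grind, rfl⟩
  · intro i hi
    obtain ⟨p, ⟨hp, hip⟩, huniq⟩ := h.2 i (by simp [hi])
    refine ⟨p, ⟨Finset.mem_erase.2 ⟨?_, hp⟩, hip⟩, ?_⟩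
    · rintro rfl
      simp only [Finset.mem_insert, Finset.mem_singleton] at hip
      rcases hip with rfl | rfl <;> contradiction
    · rintro q ⟨hq, hiq⟩
      exact huniq q ⟨Finset.mem_of_mem_erase hq, hiq⟩

/-- Blocking of `{i, j}` depends only on the pairs of the matching that meet `{i, j}`. -/
theorem isBlocking_union_pair_iff {t : ℕ → AttrType} {M : Finset (Finset ℕ)} {a b i j : ℕ}
    (hi : i ∉ ({a, b} : Finset ℕ)) (hj : j ∉ ({a, b} : Finset ℕ)) :
    IsBlocking t (M ∪ {({a, b} : Finset ℕ)}) i j ↔ IsBlocking t M i j := by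
  have key : ∀ x k, x ∉ ({a, b} : Finset ℕ) →
      (({x, k} : Finset ℕ) ∈ M ∪ {({a, b} : Finset ℕ)} ↔ ({x, k} : Finset ℕ) ∈ M) := by
    intro x k hx
    have hne : ({x, k} : Finset ℕ) ≠ {a, b} := fun he => hx (he ▸ by simp)
    rw [Finset.mem_union, Finset.mem_singleton, or_iff_left hne]
  simp only [IsBlocking, key i _ hi, key j _ hj]

theorem IsStable.top_pair_mem {n : ℕ} (hn : 3 ≤ n) {t : ℕ → AttrType}
    (h3 : t (2 * n - 2) = AttrType.B) (h4 : t (2 * n - 1) = AttrType.A)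
    (h5 : t (2 * n) = AttrType.B) {M : Finset (Finset ℕ)}
    (hM : IsStable t (Finset.Icc 1 (2 * n)) M) : ({2 * n - 2, 2 * n} : Finset ℕ) ∈ M := by
  by_contra hab
  have ha : 2 * n - 2 ∈ Finset.Icc 1 (2 * n) := Finset.mem_Icc.2 (by omega)
  have hc : 2 * n - 1 ∈ Finset.Icc 1 (2 * n) := Finset.mem_Icc.2 (by omega)
  have hb : 2 * n ∈ Finset.Icc 1 (2 * n) := Finset.mem_Icc.2 (by omega)
  obtain ⟨x, hxS, hxa, hxM, hx⟩ := hM.1.exists_partner_s14 ha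
  obtain ⟨y, hyS, hyb, hyM, hy⟩ := hM.1.exists_partner_s14 hb
  obtain ⟨z, -, hzc, hzM, hz⟩ := hM.1.exists_partner_s14 hc
  rw [Finset.mem_Icc] at hxS hyS
  have hxb : x ≠ 2 * n := by rintro rfl; exact hab hxM
  have hyc : y = 2 * n - 1 := by
    by_contra hyc
    have hya : y ≠ 2 * n - 2 := by
      rintro rfl
      exact hab (by rw [Finset.pair_comm]; exact hyM)
    refine hM.2 _ ha _ hb ⟨by omega, hab, fun k hk _ => ?_, fun k hk _ => ?_⟩
    · rw [prefers_B h3, hx k hk]; omega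
    · rw [prefers_B h5, hy k hk]; omega
  subst hyc
  have hzb : 2 * n = z := hz _ (by rw [Finset.pair_comm]; exact hyM)
  have hxc : x ≠ 2 * n - 1 := by
    rintro rfl
    have := hz (2 * n - 2) (by rw [Finset.pair_comm]; exact hxM)
    omega
  refine hM.2 _ ha _ hc ⟨by omega, fun hac => hxc (hx _ hac).symm, fun k hk _ => ?_,
    fun k hk _ => ?_⟩
  · rw [prefers_B h3, hx k hk]; omega
  · rw [prefers_A h4, hz k hk]; omega

/-- Case (S4): types 1A, 2B, (2n-2)B, (2n-1)A, (2n)B.  Every stable matching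
contains the pair {2n-2,2n}, and the stable matchings are exactly the stable
matchings of the restricted instance on {1,…,2n-3} ∪ {2n-1} together with
{2n-2,2n}. -/
theorem one_attribute_case_S4 (n : ℕ) (hn : 3 ≤ n) (t : ℕ → AttrType)
    (h1 : t 1 = AttrType.A) (h2 : t 2 = AttrType.B)
    (h3 : t (2 * n - 2) = AttrType.B) (h4 : t (2 * n - 1) = AttrType.A)
    (h5 : t (2 * n) = AttrType.B) :
    (∀ M : Finset (Finset ℕ), IsStable t (Finset.Icc 1 (2 * n)) M →
      ({2 * n - 2, 2 * n} : Finset ℕ) ∈ M) ∧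
    (∀ M : Finset (Finset ℕ), IsStable t (Finset.Icc 1 (2 * n)) M ↔
      ∃ M' : Finset (Finset ℕ),
        IsStable t (insert (2 * n - 1) (Finset.Icc 1 (2 * n - 3))) M' ∧
        M = M' ∪ {({2 * n - 2, 2 * n} : Finset ℕ)}) := by
  refine ⟨fun M hM => hM.top_pair_mem hn h3 h4 h5, fun M => ?_⟩
  have hmemS : ∀ i, i ∈ insert (2 * n - 1) (Finset.Icc 1 (2 * n - 3)) ↔
      i ∈ Finset.Icc 1 (2 * n) ∧ i ∉ ({2 * n - 2, 2 * n} : Finset ℕ) := by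
    intro i
    simp only [Finset.mem_insert, Finset.mem_Icc, Finset.mem_singleton]
    omega
  have hS : Finset.Icc 1 (2 * n) = insert (2 * n - 2) (insert (2 * n)
      (insert (2 * n - 1) (Finset.Icc 1 (2 * n - 3)))) := by
    ext i
    simp only [Finset.mem_insert, Finset.mem_Icc]
    omega
  have haS : 2 * n - 2 ∉ insert (2 * n - 1) (Finset.Icc 1 (2 * n - 3)) := by
    rw [hmemS]; simp
  have hbS : 2 * n ∉ insert (2 * n - 1) (Finset.Icc 1 (2 * n - 3)) := by
    rw [hmemS]; simp
  constructor
  · intro hM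
    have hab := hM.top_pair_mem hn h3 h4 h5
    have hunion : M = M.erase {2 * n - 2, 2 * n} ∪ {({2 * n - 2, 2 * n} : Finset ℕ)} := by
      ext p
      by_cases hp : p = {2 * n - 2, 2 * n} <;> simp [hp, hab]
    refine ⟨M.erase {2 * n - 2, 2 * n}, ⟨(hS ▸ hM.1).erase_pair_s14 haS hbS hab, ?_⟩, hunion⟩
    intro i hi j hj hblock
    rw [hmemS] at hi hj
    refine hM.2 i hi.1 j hj.1 ?_
    rw [hunion]
    exact (isBlocking_union_pair_iff hi.2 hj.2).2 hblock
  · rintro ⟨M', hM', rfl⟩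
    refine ⟨hS ▸ hM'.1.union_pair_s14 (by omega) haS hbS, ?_⟩
    have hab : ({2 * n - 2, 2 * n} : Finset ℕ) ∈
        M' ∪ {({2 * n - 2, 2 * n} : Finset ℕ)} := by simp
    -- Neither `2n - 2` nor `2n` belongs to a blocking pair.
    have hno : ∀ i ∈ ({2 * n - 2, 2 * n} : Finset ℕ), ∀ j ∈ Finset.Icc 1 (2 * n),
        ¬ IsBlocking t (M' ∪ {({2 * n - 2, 2 * n} : Finset ℕ)}) i j := by
      intro i hi j hj hblock
      rw [Finset.mem_Icc] at hj
      rw [Finset.mem_insert, Finset.mem_singleton] at hi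
      rcases hi with rfl | rfl
      · have := (prefers_B h3).1 (hblock.2.2.1 (2 * n) hab (by omega))
        omega
      · have hgt := (prefers_B h5).1
          (hblock.2.2.1 (2 * n - 2) (by rw [Finset.pair_comm (2 * n) (2 * n - 2)]; exact hab) (by omega))
        have hne := hblock.1
        obtain rfl : j = 2 * n - 1 := by omega
        obtain ⟨k, hkS, hkc, hkM, -⟩ := hM'.1.exists_partner_s14
          (Finset.mem_insert_self (2 * n - 1) (Finset.Icc 1 (2 * n - 3)))
        have := (prefers_A h4).1 (hblock.2.2.2 k (Finset.mem_union_left _ hkM) hkc)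
        have := Finset.mem_Icc.1 ((hmemS k).1 hkS).1
        omega
    intro i hi j hj hblock
    by_cases hi' : i ∈ ({2 * n - 2, 2 * n} : Finset ℕ)
    · exact hno i hi' j hj hblock
    by_cases hj' : j ∈ ({2 * n - 2, 2 * n} : Finset ℕ)
    · exact hno j hj' i hi hblock.symm
    exact hM'.2 i ((hmemS i).2 ⟨hi, hi'⟩) j ((hmemS j).2 ⟨hj, hj'⟩)
      ((isBlocking_union_pair_iff hi' hj').1 hblock)
end
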